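/- Let Y1 be a Steiner triple system with more than 7 points that is PG(3,2)-2-pointed with respect to some pair of its points and satisfies |Y1| ≡ 7 (mod 8). If k ≥ 4 and Y := Y1 × PG(k−1,2) is the direct product, then (i) |Y| ≡ 1 (mod 8), and (ii) both Y1 and Y are PG(2,2)-paired. -/

import Mathlib

open Finset

noncomputable section
open scoped Classical

/-- `T` is the set of triples of a Steiner triple system on the finite type `α`:
every pair of distinct points lies in exactly one triple. -/
def IsSTS {α : Type*} (T : Finset (Finset α)) : Prop :=
  (∀ t ∈ T, t.card = 3) ∧
    ∀ p q : α, p ≠ q → ∃! t : Finset α, t ∈ T ∧ p ∈ t ∧ q ∈ t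

/-- `T` is the set of triples of a partial Steiner triple system on `α`:
every pair of distinct points lies in at most one triple. -/
def IsPSTS {α : Type*} (T : Finset (Finset α)) : Prop :=
  (∀ t ∈ T, t.card = 3) ∧
    ∀ p q : α, p ≠ q → ∀ t₁ ∈ T, ∀ t₂ ∈ T, p ∈ t₁ → q ∈ t₁ → p ∈ t₂ → q ∈ t₂ → t₁ = t₂

/-- `W` is a (closed) subsystem of the triple system `T`. -/
def IsSub {α : Type*} (T : Finset (Finset α)) (W : Finset α) : Prop :=
  ∀ t ∈ T, 2 ≤ (t ∩ W).card → t ⊆ W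

/-- `g` is an automorphism of the triple system `T`. -/
def IsAut {α : Type*} (T : Finset (Finset α)) (g : Equiv.Perm α) : Prop :=
  ∀ t : Finset α, t ∈ T ↔ t.image g ∈ T

/-- The automorphism group of a triple system, as a subgroup of the permutation group. -/
def autGroup {α : Type*} (T : Finset (Finset α)) : Subgroup (Equiv.Perm α) where
  carrier := {g : Equiv.Perm α | IsAut T g}
  one_mem' := by
    intro t
    simp
  mul_mem' := by
    intro a b ha hb t
    have h1 := hb t
    have h2 := ha (t.image b)
    have key : t.image ⇑(a * b) = (t.image ⇑b).image ⇑a := by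
      rw [Equiv.Perm.coe_mul, Finset.image_image]
    rw [key, ← h2]
    exact h1
  inv_mem' := by
    intro a ha t
    have h := ha (t.image ⇑a⁻¹)
    have key : (t.image ⇑a⁻¹).image ⇑a = t := by
      rw [Finset.image_image]
      have hc : (⇑a ∘ ⇑a⁻¹) = id := by
        funext x
        simp
      rw [hc, Finset.image_id]
    rw [key] at h
    exact h.symm

/-- `φ` embeds the triple system `S` onto a subsystem of `T`: it is injective, maps
triples of `S` to triples of `T`, and the triples of `T` inside the image of `φ` are
precisely the images of the triples of `S`. -/
def IsCopy {α β : Type*} [Fintype α] (S : Finset (Finset α)) (T : Finset (Finset β))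
    (φ : α → β) : Prop :=
  Function.Injective φ ∧ (∀ s ∈ S, s.image φ ∈ T) ∧
    ∀ t ∈ T, t ⊆ Finset.univ.image φ → ∃ s ∈ S, t = s.image φ

/-- The point set `W` is invariant under every automorphism of `T`. -/
def AutInvariant {β : Type*} (T : Finset (Finset β)) (W : Finset β) : Prop :=
  ∀ g : Equiv.Perm β, IsAut T g → W.image g = W

/-- For the copy of `S` inside `T` given by `φ`, restriction gives a group isomorphism
from `Aut T` onto `Aut S`: every automorphism of `T` induces (via `φ`) an automorphism
of `S`, and every automorphism of `S` is induced by exactly one automorphism of `T`. -/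
def AutRestrictIso {α β : Type*} (T : Finset (Finset β)) (S : Finset (Finset α))
    (φ : α → β) : Prop :=
  (∀ g : Equiv.Perm β, IsAut T g →
      ∃ h : Equiv.Perm α, IsAut S h ∧ ∀ x : α, g (φ x) = φ (h x)) ∧
    ∀ h : Equiv.Perm α, IsAut S h →
      ∃! g : Equiv.Perm β, IsAut T g ∧ ∀ x : α, g (φ x) = φ (h x)

/-- `φ` embeds `S` as an `Aut T`-invariant subsystem of `T` on which `Aut T` induces
the full automorphism group of `S`, with `Aut T ≅ Aut S` via restriction. -/
def FullEmbedding {α β : Type*} [Fintype α] (S : Finset (Finset α)) (T : Finset (Finset β))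
    (φ : α → β) : Prop :=
  IsCopy S T φ ∧ AutInvariant T (Finset.univ.image φ) ∧ AutRestrictIso T S φ

/-- The points of the projective space `PG(n,2)`: nonzero vectors of `GF(2)^{n+1}`. -/
abbrev PGPoint (n : ℕ) := {x : Fin (n + 1) → ZMod 2 // x ≠ 0}

/-- The lines of `PG(n,2)`: 3-sets of nonzero vectors summing to `0`. -/
def PGTriples (n : ℕ) : Finset (Finset (PGPoint n)) :=
  Finset.univ.filter fun t : Finset (PGPoint n) =>
    t.card = 3 ∧ ∑ v ∈ t, (v : Fin (n + 1) → ZMod 2) = 0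

/-- The smallest subsystem of `T` containing the point set `P`. -/
def GeneratedSub {α : Type*} [Fintype α] (T : Finset (Finset α)) (P : Finset α) : Finset α :=
  Finset.univ.filter fun x => ∀ W : Finset α, IsSub T W → P ⊆ W → x ∈ W

/-- `W` is a subsystem of `T` isomorphic to `PG(n,2)`. -/
def IsPGSub {α : Type*} [Fintype α] (n : ℕ) (T : Finset (Finset α)) (W : Finset α) : Prop :=
  ∃ φ : PGPoint n → α, IsCopy (PGTriples n) T φ ∧ Finset.univ.image φ = W

/-- A triple system is `PG(2,2)`-paired if any two distinct points lie in at least two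
subsystems isomorphic to `PG(2,2)`. -/
def PG22Paired {α : Type*} [Fintype α] (T : Finset (Finset α)) : Prop :=
  ∀ p q : α, p ≠ q → ∃ W₁ W₂ : Finset α, W₁ ≠ W₂ ∧
    (p ∈ W₁ ∧ q ∈ W₁ ∧ IsPGSub 2 T W₁) ∧ p ∈ W₂ ∧ q ∈ W₂ ∧ IsPGSub 2 T W₂

/-- `T` is `PG(3,2)`-2-pointed with respect to the points `p, q`: any four points
including `p` and `q` generate a subsystem isomorphic to `PG(2,2)` or `PG(3,2)`. -/
def PG32TwoPointed {α : Type*} [Fintype α] (T : Finset (Finset α)) (p q : α) : Prop :=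
  p ≠ q ∧ ∀ s : Finset α, s.card = 4 → p ∈ s → q ∈ s →
    IsPGSub 2 T (GeneratedSub T s) ∨ IsPGSub 3 T (GeneratedSub T s)

/-- The copy of `Y` inside `2Y+1`. -/
def dp0 {γ : Type*} (a : γ) : γ ⊕ γ ⊕ Unit := Sum.inl a

/-- The disjoint copy `Y₁` of `Y` inside `2Y+1`. -/
def dp1 {γ : Type*} (a : γ) : γ ⊕ γ ⊕ Unit := Sum.inr (Sum.inl a)

/-- The extra point `*` of `2Y+1`. -/
def dpStar {γ : Type*} : γ ⊕ γ ⊕ Unit := Sum.inr (Sum.inr ())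

/-- The triples of the Steiner triple system `2Y+1` built from a system `Y` with
triple set `T`. -/
def DoubleTriples {γ : Type*} [Fintype γ] (T : Finset (Finset γ)) :
    Finset (Finset (γ ⊕ γ ⊕ Unit)) :=
  Finset.univ.filter fun t : Finset (γ ⊕ γ ⊕ Unit) =>
    (∃ s ∈ T, t = s.image dp0) ∨
    (∃ a : γ, t = {dpStar, dp0 a, dp1 a}) ∨
    (∃ a b c : γ, ({a, b, c} : Finset γ) ∈ T ∧ t = {dp1 a, dp1 b, dp0 c})

/-- The triples of the direct product of two triple systems. -/
def ProdTriples {α β : Type*} [Fintype α] [Fintype β]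
    (TA : Finset (Finset α)) (TB : Finset (Finset β)) : Finset (Finset (α × β)) :=
  Finset.univ.filter fun t : Finset (α × β) =>
    (∃ a : α, ∃ s ∈ TB, t = s.image fun b => (a, b)) ∨
    (∃ b : β, ∃ s ∈ TA, t = s.image fun a => (a, b)) ∨
    (∃ a₁ a₂ a₃ : α, ∃ b₁ b₂ b₃ : β, ({a₁, a₂, a₃} : Finset α) ∈ TA ∧
      ({b₁, b₂, b₃} : Finset β) ∈ TB ∧ t = {(a₁, b₁), (a₂, b₂), (a₃, b₃)})

/-- The triples of Moore's construction `U = X ∪ (V × A)`.  Here `TX` (on `δ`), `TV`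
(on `α`), `TY` (on `γ`) are the triple sets of `X`, `V`, `Y`; `j : δ → γ` embeds `X`
as a subsystem of `Y` and `ℓ : A → γ` labels `Y − X` by the group `A`. -/
def MooreTriples {δ α γ A : Type*} [Fintype δ] [Fintype α] [Fintype A] [Group A]
    (TX : Finset (Finset δ)) (TV : Finset (Finset α)) (TY : Finset (Finset γ))
    (j : δ → γ) (ℓ : A → γ) : Finset (Finset (δ ⊕ α × A)) :=
  Finset.univ.filter fun t : Finset (δ ⊕ α × A) =>
    (∃ s ∈ TX, t = s.image Sum.inl) ∨
    (∃ v : α, ∃ a₁ a₂ : A, ∃ x : δ, ({ℓ a₁, ℓ a₂, j x} : Finset γ) ∈ TY ∧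
      t = {Sum.inr (v, a₁), Sum.inr (v, a₂), Sum.inl x}) ∨
    (∃ v : α, ∃ a₁ a₂ a₃ : A, ({ℓ a₁, ℓ a₂, ℓ a₃} : Finset γ) ∈ TY ∧
      t = {Sum.inr (v, a₁), Sum.inr (v, a₂), Sum.inr (v, a₃)}) ∨
    (∃ v₁ v₂ v₃ : α, ∃ a₁ a₂ a₃ : A, ({v₁, v₂, v₃} : Finset α) ∈ TV ∧ a₁ * a₂ * a₃ = 1 ∧
      t = {Sum.inr (v₁, a₁), Sum.inr (v₂, a₂), Sum.inr (v₃, a₃)})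

/-- The hypotheses of Moore's construction: `Y` and `V` are Steiner triple systems,
`A` is a cyclic group, `j` embeds `X` as a subsystem of `Y` (with triple set `TX`),
and `ℓ` is a bijective labeling of `Y − X` by `A`. -/
def MooreSetup {δ α γ A : Type*} [Fintype δ] [Group A]
    (TX : Finset (Finset δ)) (TV : Finset (Finset α)) (TY : Finset (Finset γ))
    (j : δ → γ) (ℓ : A → γ) : Prop :=
  IsSTS TY ∧ IsSTS TV ∧ IsCyclic A ∧ Function.Injective j ∧
    IsSub TY (Finset.univ.image j) ∧ IsCopy TX TY j ∧
    Function.Injective ℓ ∧ Set.range ℓ = (Set.range j)ᶜ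

/-- The subsystem `Y_v = X ∪ (v × A)` of Moore's construction. -/
def MooreY {δ α A : Type*} [Fintype δ] [Fintype A] (v : α) : Finset (δ ⊕ α × A) :=
  (Finset.univ.image (Sum.inl : δ → δ ⊕ α × A)) ∪
    Finset.univ.image fun a : A => (Sum.inr (v, a) : δ ⊕ α × A)

/-- A subsystem of type (3.1) of Moore's construction, where `ε` denotes the unique
involution `−1` of `A`: the seven points `x, (v_i, a_i), (v_i, −a_i)` for a triple
`{v₁,v₂,v₃}` of `V`, with `a₁a₂a₃ = 1` and `{a_i, −a_i, x}` a triple of `Y`. -/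
def MooreType31 {δ α γ A : Type*} [Group A] (TV : Finset (Finset α))
    (TY : Finset (Finset γ)) (j : δ → γ) (ℓ : A → γ) (ε : A)
    (W : Finset (δ ⊕ α × A)) : Prop :=
  ∃ v₁ v₂ v₃ : α, ∃ a₁ a₂ a₃ : A, ∃ x : δ,
    ({v₁, v₂, v₃} : Finset α) ∈ TV ∧ a₁ * a₂ * a₃ = 1 ∧
    ({ℓ a₁, ℓ (ε * a₁), j x} : Finset γ) ∈ TY ∧
    ({ℓ a₂, ℓ (ε * a₂), j x} : Finset γ) ∈ TY ∧
    ({ℓ a₃, ℓ (ε * a₃), j x} : Finset γ) ∈ TY ∧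
    W = {Sum.inl x, Sum.inr (v₁, a₁), Sum.inr (v₁, ε * a₁), Sum.inr (v₂, a₂),
         Sum.inr (v₂, ε * a₂), Sum.inr (v₃, a₃), Sum.inr (v₃, ε * a₃)}

/-- The point set of a family of triples. -/
def ptsOf {β : Type*} (T : Finset (Finset β)) : Finset β := T.sup id

/-- Adjacency of triples: two distinct triples of `T` meeting in a point. -/
def TriAdj {β : Type*} (T : Finset (Finset β)) (t s : Finset β) : Prop :=
  t ∈ T ∧ s ∈ T ∧ t ≠ s ∧ (t ∩ s).Nonempty

/-- A partial Steiner triple system is cyclic if the graph whose vertices are its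
triples, two joined when they meet, is a cycle (equivalently: it has at least three
triples, every triple meets exactly two others, and the graph is connected). -/
def IsCyclicPSTS {β : Type*} (T : Finset (Finset β)) : Prop :=
  3 ≤ T.card ∧ (∀ t ∈ T, (T.filter fun s => s ≠ t ∧ (s ∩ t).Nonempty).card = 2) ∧
    ∀ t ∈ T, ∀ s ∈ T, Relation.ReflTransGen (TriAdj T) t s

/-- The partial Steiner triple system `Q(z)` (for the parameter `n`), with triple set
`T`, point set `P` and distinguished point `z`: two cyclic PSTSs `C₁, C₂` on
`2n+4` and `2n+6` points meeting exactly in the point `z`, which lies in two triples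
of each, triples `{z, z'_i, z_i}` of `C_i` with `z'_i` in two triples of `C_i`, and a
new point `z'` in the single additional triple `{z'_1, z', z'_2}`. -/
def IsQ {β : Type*} (n : ℕ) (T : Finset (Finset β)) (P : Finset β) (z : β) : Prop :=
  ∃ C₁ C₂ : Finset (Finset β), ∃ z' z₁' z₂' z₁ z₂ : β,
    IsPSTS T ∧ IsCyclicPSTS C₁ ∧ IsCyclicPSTS C₂ ∧
    (ptsOf C₁).card = 2 * n + 4 ∧ (ptsOf C₂).card = 2 * n + 6 ∧
    ptsOf C₁ ∩ ptsOf C₂ = {z} ∧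
    (C₁.filter fun t => z ∈ t).card = 2 ∧ (C₂.filter fun t => z ∈ t).card = 2 ∧
    ({z, z₁', z₁} : Finset β) ∈ C₁ ∧ (C₁.filter fun t => z₁' ∈ t).card = 2 ∧
    ({z, z₂', z₂} : Finset β) ∈ C₂ ∧ (C₂.filter fun t => z₂' ∈ t).card = 2 ∧
    z' ∉ ptsOf C₁ ∪ ptsOf C₂ ∧
    T = C₁ ∪ C₂ ∪ {({z₁', z', z₂'} : Finset β)} ∧
    P = ptsOf C₁ ∪ ptsOf C₂ ∪ {z'}

/-- Nonempty subsets of `β`: the points of the projective space `P` over `GF(2)`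
built on a point set `β`. -/
abbrev NESet (β : Type*) := {s : Finset β // s.Nonempty}

/-- The triples of the projective space over `GF(2)` on the nonempty subsets of `β`:
3-sets of subsets with empty symmetric difference. -/
def sdTriples (β : Type*) [Fintype β] : Finset (Finset (NESet β)) :=
  Finset.univ.filter fun t : Finset (NESet β) =>
    ∃ a b c : NESet β, a ≠ b ∧ a ≠ c ∧ b ≠ c ∧ t = {a, b, c} ∧
      symmDiff (symmDiff a.1 b.1) c.1 = ∅

/-- The singleton `{a}` as a point of the projective space. -/
def sEl {β : Type*} (a : β) : NESet β := ⟨{a}, Finset.singleton_nonempty a⟩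

/-- The pair `{a,b}` as a point of the projective space. -/
def pEl {β : Type*} (a b : β) : NESet β := ⟨{a, b}, Finset.insert_nonempty a {b}⟩

/-- The triples of `P` removed in Cameron's construction, for each triple `{a,b,c}`
of `V'`. -/
def removedTriples {β : Type*} [Fintype β] (TV' : Finset (Finset β)) :
    Finset (Finset (NESet β)) :=
  Finset.univ.filter fun t : Finset (NESet β) =>
    ∃ a b c : β, ({a, b, c} : Finset β) ∈ TV' ∧
      (t = {pEl a b, pEl a c, pEl b c} ∨ t = {sEl a, sEl b, pEl a b} ∨
       t = {sEl a, sEl c, pEl a c} ∨ t = {sEl b, sEl c, pEl b c})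

/-- The new triples of Cameron's construction, for each triple `{a,b,c}` of `V'`. -/
def addedTriples {β : Type*} [Fintype β] (TV' : Finset (Finset β)) :
    Finset (Finset (NESet β)) :=
  Finset.univ.filter fun t : Finset (NESet β) =>
    ∃ a b c : β, ({a, b, c} : Finset β) ∈ TV' ∧
      (t = {sEl a, sEl b, sEl c} ∨ t = {sEl a, pEl a b, pEl a c} ∨
       t = {sEl b, pEl a b, pEl b c} ∨ t = {sEl c, pEl a c, pEl b c})

/-- The Steiner triple system `U` of Cameron's construction obtained from the
projective space `P` and the partial system `V'`. -/
def CameronSTS {β : Type*} [Fintype β] (TV' : Finset (Finset β)) :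
    Finset (Finset (NESet β)) :=
  (sdTriples β \ removedTriples TV') ∪ addedTriples TV'

theorem IsSTS.isPSTS {α : Type*} {T : Finset (Finset α)} (hT : IsSTS T) : IsPSTS T :=
  ⟨hT.1, fun p q hpq _ h₁ _ h₂ hp₁ hq₁ hp₂ hq₂ =>
    (hT.2 p q hpq).unique ⟨h₁, hp₁, hq₁⟩ ⟨h₂, hp₂, hq₂⟩⟩

/-- `φ` is injective and maps every line of `PG(n,2)` into a triple of `T`. -/
def IsLineMap {α : Type*} {n : ℕ} (T : Finset (Finset α)) (φ : PGPoint n → α) : Prop :=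
  Function.Injective φ ∧ ∀ x y z : PGPoint n, x ≠ y → x.1 + y.1 = z.1 →
    ∃ t ∈ T, φ x ∈ t ∧ φ y ∈ t ∧ φ z ∈ t

theorem ne_of_add_eq {n : ℕ} {x y z : PGPoint n} (h : x.1 + y.1 = z.1) : x ≠ z ∧ y ≠ z := by
  constructor
  · rintro rfl
    exact y.2 (by simpa using h)
  · rintro rfl
    exact x.2 (by simpa using h)

theorem add_ne_zero_of_ne {n : ℕ} {x y : PGPoint n} (h : x ≠ y) : x.1 + y.1 ≠ 0 := fun h0 =>
  h (Subtype.ext (by rwa [CharTwo.add_eq_zero] at h0))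

/-- The third point of the line through two distinct points of `PG(n,2)`. -/
def thirdPoint {n : ℕ} {x y : PGPoint n} (h : x ≠ y) : PGPoint n :=
  ⟨x.1 + y.1, add_ne_zero_of_ne h⟩

theorem mem_PGTriples {n : ℕ} {x y z : PGPoint n} (hxy : x ≠ y) (h : x.1 + y.1 = z.1) :
    ({x, y, z} : Finset (PGPoint n)) ∈ PGTriples n := by
  obtain ⟨hxz, hyz⟩ := ne_of_add_eq h
  simp only [PGTriples, mem_filter, mem_univ, true_and]
  refine ⟨card_eq_three.2 ⟨x, y, z, hxy, hxz, hyz, by congr⟩, ?_⟩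
  rw [sum_insert (by simp [hxy, hxz]), sum_insert (by simp [hyz]), sum_singleton, ← add_assoc, h]
  exact CharTwo.add_self_eq_zero _

theorem exists_of_mem_PGTriples {n : ℕ} {s : Finset (PGPoint n)} (hs : s ∈ PGTriples n) :
    ∃ x y z : PGPoint n, x ≠ y ∧ x.1 + y.1 = z.1 ∧ s = {x, y, z} := by
  simp only [PGTriples, mem_filter, mem_univ, true_and] at hs
  obtain ⟨hc, hsum⟩ := hs
  obtain ⟨x, y, z, hxy, hxz, hyz, rfl⟩ := card_eq_three.1 hc
  rw [sum_insert (by simp [hxy, hxz]), sum_insert (by simp [hyz]), sum_singleton, ← add_assoc,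
    CharTwo.add_eq_zero] at hsum
  exact ⟨x, y, z, hxy, hsum, by congr⟩

theorem IsCopy.isLineMap {α : Type*} {n : ℕ} {T : Finset (Finset α)} {φ : PGPoint n → α}
    (h : IsCopy (PGTriples n) T φ) : IsLineMap T φ :=
  ⟨h.1, fun x y z hxy hz => ⟨_, h.2.1 _ (mem_PGTriples hxy hz),
    mem_image_of_mem _ (by simp), mem_image_of_mem _ (by simp), mem_image_of_mem _ (by simp)⟩⟩

theorem IsLineMap.isCopy {α : Type*} {n : ℕ} {T : Finset (Finset α)} {φ : PGPoint n → α}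
    (hT : IsPSTS T) (h : IsLineMap T φ) : IsCopy (PGTriples n) T φ := by
  have key : ∀ x y z : PGPoint n, x ≠ y → x.1 + y.1 = z.1 → ∀ t ∈ T, φ x ∈ t → φ y ∈ t →
      φ z ∈ t → t = ({x, y, z} : Finset (PGPoint n)).image φ := by
    intro x y z hxy hz t ht hx hy hz'
    refine (eq_of_subset_of_card_le ?_ ?_).symm
    · intro a ha
      simp only [mem_image, mem_insert, mem_singleton] at ha
      obtain ⟨b, rfl | rfl | rfl, rfl⟩ := ha <;> assumption
    · rw [card_image_of_injective _ h.1, hT.1 t ht]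
      have := mem_PGTriples hxy hz
      simp only [PGTriples, mem_filter] at this
      exact this.2.1.ge
  refine ⟨h.1, ?_, ?_⟩
  · intro s hs
    obtain ⟨x, y, z, hxy, hz, rfl⟩ := exists_of_mem_PGTriples hs
    obtain ⟨t, ht, h1, h2, h3⟩ := h.2 x y z hxy hz
    rw [← key x y z hxy hz t ht h1 h2 h3]
    exact ht
  · intro t ht hsub
    obtain ⟨a, b, hab, c, rfl⟩ : ∃ a b, a ≠ b ∧ ∃ c, t = {a, b, c} := by
      obtain ⟨a, b, c, hab, -, -, rfl⟩ := card_eq_three.1 (hT.1 t ht)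
      exact ⟨a, b, hab, c, rfl⟩
    obtain ⟨x, -, rfl⟩ := mem_image.1 (hsub (show a ∈ _ by simp))
    obtain ⟨y, -, rfl⟩ := mem_image.1 (hsub (show b ∈ _ by simp))
    have hxy : x ≠ y := fun e => hab (e ▸ rfl)
    obtain ⟨t', ht', h1, h2, h3⟩ := h.2 x y (thirdPoint hxy) hxy rfl
    refine ⟨{x, y, thirdPoint hxy}, mem_PGTriples hxy rfl, ?_⟩
    rw [← key x y _ hxy rfl t' ht' h1 h2 h3]
    exact hT.2 _ _ hab _ ht _ ht' (by simp) (by simp) h1 h2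

/-- The map of projective spaces induced by an injective linear map. -/
def projMap {m n : ℕ} (F : (Fin (m + 1) → ZMod 2) →ₗ[ZMod 2] (Fin (n + 1) → ZMod 2))
    (hF : Function.Injective F) (x : PGPoint m) : PGPoint n :=
  ⟨F x.1, fun h => x.2 (hF (h.trans (map_zero F).symm))⟩

theorem projMap_injective {m n : ℕ}
    (F : (Fin (m + 1) → ZMod 2) →ₗ[ZMod 2] (Fin (n + 1) → ZMod 2))
    (hF : Function.Injective F) : Function.Injective (projMap F hF) := fun _ _ h =>
  Subtype.ext (hF (congrArg Subtype.val h))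

theorem IsLineMap.comp_projMap {α : Type*} {m n : ℕ} {T : Finset (Finset α)}
    {φ : PGPoint n → α} (h : IsLineMap T φ)
    (F : (Fin (m + 1) → ZMod 2) →ₗ[ZMod 2] (Fin (n + 1) → ZMod 2))
    (hF : Function.Injective F) : IsLineMap T (φ ∘ projMap F hF) :=
  ⟨h.1.comp (projMap_injective F hF), fun x y z hxy hz =>
    h.2 _ _ _ ((projMap_injective F hF).ne hxy) (by simp only [projMap, ← map_add, hz])⟩

theorem isLineMap_id (n : ℕ) : IsLineMap (PGTriples n) (id : PGPoint n → PGPoint n) :=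
  ⟨Function.injective_id, fun x y z hxy hz => ⟨_, mem_PGTriples hxy hz, by simp⟩⟩

/-- The `i`-th coordinate point of `PG(n,2)`. -/
def unitPoint {n : ℕ} (i : Fin (n + 1)) : PGPoint n :=
  ⟨Pi.single i 1, by simp⟩

/-- Any two distinct points `p`, `q` lie in a `PG(3,2)`, coordinatized so that they are its
first two coordinate points. -/
def PG32Paired {α : Type*} (T : Finset (Finset α)) : Prop :=
  ∀ p q : α, p ≠ q → ∃ φ : PGPoint 3 → α, IsLineMap T φ ∧
    φ (unitPoint 0) = p ∧ φ (unitPoint 1) = q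

theorem exists_projMap_unitPoint {n : ℕ} (hn : 3 ≤ n) {x y : PGPoint n} (hxy : x ≠ y) :
    ∃ (F : (Fin (3 + 1) → ZMod 2) →ₗ[ZMod 2] (Fin (n + 1) → ZMod 2))
      (hF : Function.Injective F),
      projMap F hF (unitPoint 0) = x ∧ projMap F hF (unitPoint 1) = y := by
  have hli : LinearIndependent (ZMod 2) ![x.1, y.1] := by
    have h01 : ∀ s : ZMod 2, s = 0 ∨ s = 1 := by decide
    rw [LinearIndependent.pair_iff]
    intro s t hst
    rcases h01 s with rfl | rfl <;> rcases h01 t with rfl | rfl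
    · simp
    · exact absurd (by simpa using hst) y.2
    · exact absurd (by simpa using hst) x.2
    · exact absurd (by simpa using hst) (add_ne_zero_of_ne hxy)
  have hfr : Module.finrank (ZMod 2) (Fin (n + 1) → ZMod 2) = n + 1 := by simp
  obtain ⟨z, hz⟩ := exists_linearIndependent_snoc_of_lt_finrank hli (by omega)
  obtain ⟨w, hw⟩ := exists_linearIndependent_snoc_of_lt_finrank hz (by omega)
  refine ⟨Fintype.linearCombination (ZMod 2) _, hw.fintypeLinearCombination_injective,
    Subtype.ext ?_, Subtype.ext ?_⟩
  · simp only [projMap, unitPoint, Fintype.linearCombination_apply_single, one_smul]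
    rfl
  · simp only [projMap, unitPoint, Fintype.linearCombination_apply_single, one_smul]
    rfl

theorem pg32Paired_of_mem_range {α : Type*} {n : ℕ} (hn : 3 ≤ n) {T : Finset (Finset α)}
    (h : ∀ p q : α, p ≠ q → ∃ φ : PGPoint n → α, IsLineMap T φ ∧
      p ∈ Set.range φ ∧ q ∈ Set.range φ) : PG32Paired T := by
  intro p q hpq
  obtain ⟨φ, hφ, ⟨x, rfl⟩, y, rfl⟩ := h p q hpq
  obtain ⟨F, hF, h0, h1⟩ := exists_projMap_unitPoint hn (x := x) (y := y) fun e => hpq (e ▸ rfl)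
  exact ⟨_, hφ.comp_projMap F hF, congrArg φ h0, congrArg φ h1⟩

theorem pg32Paired_PGTriples {n : ℕ} (hn : 3 ≤ n) : PG32Paired (PGTriples n) :=
  pg32Paired_of_mem_range hn fun p q _ => ⟨id, isLineMap_id n, ⟨p, rfl⟩, q, rfl⟩

/-- The coordinate embedding of `GF(2)^3` into `GF(2)^4` along `e`. -/
def coordEmbedding (e : Fin 3 ↪ Fin 4) :
    (Fin (2 + 1) → ZMod 2) →ₗ[ZMod 2] (Fin (3 + 1) → ZMod 2) :=
  Function.ExtendByZero.linearMap (ZMod 2) e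

theorem coordEmbedding_apply (e : Fin 3 ↪ Fin 4) (v : Fin 3 → ZMod 2) (i : Fin 3) :
    coordEmbedding e v (e i) = v i := by
  simp [coordEmbedding, e.injective.extend_apply]

theorem coordEmbedding_apply_of_notMem (e : Fin 3 ↪ Fin 4) (v : Fin 3 → ZMod 2) {j : Fin 4}
    (hj : ∀ i, e i ≠ j) : coordEmbedding e v j = 0 := by
  simp [coordEmbedding, Function.extend_apply' _ _ _ (fun h => hj _ h.choose_spec)]

theorem coordEmbedding_injective (e : Fin 3 ↪ Fin 4) :
    Function.Injective (coordEmbedding e) := fun v w h => funext fun i => by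
  rw [← coordEmbedding_apply e v i, h, coordEmbedding_apply]

theorem projMap_coordEmbedding_unitPoint (e : Fin 3 ↪ Fin 4) (i : Fin 3) :
    projMap (coordEmbedding e) (coordEmbedding_injective e) (unitPoint i) = unitPoint (e i) := by
  refine Subtype.ext (funext fun j => ?_)
  by_cases hj : ∃ k, e k = j
  · obtain ⟨k, rfl⟩ := hj
    simp [projMap, unitPoint, coordEmbedding_apply, Pi.single_apply]
  · push Not at hj
    simp [projMap, unitPoint, coordEmbedding_apply_of_notMem e _ hj, (hj i).symm]

theorem PG32Paired.pg22Paired {α : Type*} [Fintype α] {T : Finset (Finset α)} (hT : IsPSTS T)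
    (h : PG32Paired T) : PG22Paired T := by
  intro p q hpq
  obtain ⟨φ, hφ, rfl, rfl⟩ := h p q hpq
  let e : Fin 3 ↪ Fin 4 := ⟨![0, 1, 2], by decide⟩
  let e' : Fin 3 ↪ Fin 4 := ⟨![0, 1, 3], by decide⟩
  have hmem : ∀ (d : Fin 3 ↪ Fin 4) (i : Fin 3), φ (unitPoint (d i)) ∈
      univ.image (φ ∘ projMap (coordEmbedding d) (coordEmbedding_injective d)) := fun d i =>
    mem_image.2 ⟨unitPoint i, mem_univ _, congrArg φ (projMap_coordEmbedding_unitPoint d i)⟩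
  refine ⟨_, _, ?_,
    ⟨hmem e 0, hmem e 1, _, (hφ.comp_projMap _ (coordEmbedding_injective e)).isCopy hT, rfl⟩,
    hmem e' 0, hmem e' 1, _, (hφ.comp_projMap _ (coordEmbedding_injective e')).isCopy hT, rfl⟩
  intro heq
  have h2 := hmem e 2
  rw [heq] at h2
  obtain ⟨v, -, hv⟩ := mem_image.1 h2
  have h3 := congrFun (congrArg Subtype.val (hφ.1 hv)) 2
  have h4 : coordEmbedding e' v.1 2 = 0 := coordEmbedding_apply_of_notMem e' v.1 (by decide)
  simp only [projMap, h4, unitPoint] at h3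
  simp [e] at h3

/-- Three points are equal or form a triple of `T`. -/
def EqOrTriple {α : Type*} (T : Finset (Finset α)) (a b c : α) : Prop :=
  (a = b ∧ b = c) ∨ (a ≠ b ∧ a ≠ c ∧ b ≠ c ∧ ∃ t ∈ T, a ∈ t ∧ b ∈ t ∧ c ∈ t)

theorem EqOrTriple.swap {α : Type*} {T : Finset (Finset α)} {a b c : α}
    (h : EqOrTriple T a b c) : EqOrTriple T b a c := by
  unfold EqOrTriple at *
  grind

theorem EqOrTriple.rotate {α : Type*} {T : Finset (Finset α)} {a b c : α}
    (h : EqOrTriple T a b c) : EqOrTriple T b c a := by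
  unfold EqOrTriple at *
  grind

theorem eq_triple_of_card {α : Type*} {t : Finset α} (ht : t.card = 3) {a b c : α} (hab : a ≠ b)
    (hac : a ≠ c) (hbc : b ≠ c) (ha : a ∈ t) (hb : b ∈ t) (hc : c ∈ t) : t = {a, b, c} := by
  refine (eq_of_subset_of_card_le ?_ ?_).symm
  · intro x hx
    simp only [mem_insert, mem_singleton] at hx
    obtain rfl | rfl | rfl := hx <;> assumption
  · rw [ht, card_eq_three.2 ⟨a, b, c, hab, hac, hbc, rfl⟩]

theorem EqOrTriple.unique {α : Type*} {T : Finset (Finset α)} (hT : IsPSTS T) {a b c d : α}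
    (h : EqOrTriple T a b c) (h' : EqOrTriple T a b d) : c = d := by
  rcases h with ⟨h1, h2⟩ | ⟨hab, hac, hbc, t, ht, ha, hb, hc⟩
  · rcases h' with ⟨h3, h4⟩ | ⟨h3, -⟩
    · exact h2.symm.trans h4
    · exact absurd h1 h3
  · rcases h' with ⟨h3, -⟩ | ⟨-, had, hbd, t', ht', ha', hb', hd⟩
    · exact absurd h3 hab
    · obtain rfl := hT.2 a b hab t ht t' ht' ha hb ha' hb'
      rw [eq_triple_of_card (hT.1 t ht) hab hac hbc ha hb hc] at hd
      simp only [mem_insert, mem_singleton] at hd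
      grind

theorem eqOrTriple_of_mem {α : Type*} {T : Finset (Finset α)} (hT : IsPSTS T) {a b c : α}
    (h : ({a, b, c} : Finset α) ∈ T) :
    a ≠ b ∧ a ≠ c ∧ b ≠ c ∧ EqOrTriple T a b c := by
  have h3 := hT.1 _ h
  have hab : a ≠ b := by
    rintro rfl
    have := card_le_two (a := a) (b := c)
    simp_all
  have hac : a ≠ c := by
    rintro rfl
    have := card_le_two (a := b) (b := a)
    simp_all
  have hbc : b ≠ c := by
    rintro rfl
    have := card_le_two (a := a) (b := b)
    simp_all
  exact ⟨hab, hac, hbc, Or.inr ⟨hab, hac, hbc, _, h, by simp⟩⟩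

theorem exists_of_mem_ProdTriples {α β : Type*} [Fintype α] [Fintype β]
    {TA : Finset (Finset α)} {TB : Finset (Finset β)} (hA : IsPSTS TA) (hB : IsPSTS TB)
    {t : Finset (α × β)} (ht : t ∈ ProdTriples TA TB) :
    ∃ P Q R : α × β, P ≠ Q ∧ P ≠ R ∧ Q ≠ R ∧ EqOrTriple TA P.1 Q.1 R.1 ∧
      EqOrTriple TB P.2 Q.2 R.2 ∧ t = {P, Q, R} := by
  simp only [ProdTriples, mem_filter, mem_univ, true_and] at ht
  rcases ht with ⟨a, s, hs, rfl⟩ | ⟨b, s, hs, rfl⟩ | ⟨a₁, a₂, a₃, b₁, b₂, b₃, h1, h2, rfl⟩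
  · obtain ⟨x, y, z, hxy, hxz, hyz, rfl⟩ := card_eq_three.1 (hB.1 s hs)
    exact ⟨(a, x), (a, y), (a, z), by simp [hxy], by simp [hxz], by simp [hyz],
      Or.inl ⟨rfl, rfl⟩, (eqOrTriple_of_mem hB (by convert hs)).2.2.2,
      by ext; simp⟩
  · obtain ⟨x, y, z, hxy, hxz, hyz, rfl⟩ := card_eq_three.1 (hA.1 s hs)
    exact ⟨(x, b), (y, b), (z, b), by simp [hxy], by simp [hxz], by simp [hyz],
      (eqOrTriple_of_mem hA (by convert hs)).2.2.2, Or.inl ⟨rfl, rfl⟩,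
      by ext; simp⟩
  · obtain ⟨h12, h13, h23, hA'⟩ := eqOrTriple_of_mem hA h1
    obtain ⟨-, -, -, hB'⟩ := eqOrTriple_of_mem hB h2
    exact ⟨_, _, _, by simp [h12], by simp [h13], by simp [h23], hA', hB', rfl⟩

theorem exists_mem_ProdTriples {α β : Type*} [Fintype α] [Fintype β]
    {TA : Finset (Finset α)} {TB : Finset (Finset β)} (hA : IsPSTS TA) (hB : IsPSTS TB)
    {P Q R : α × β} (hPQ : P ≠ Q) (h1 : EqOrTriple TA P.1 Q.1 R.1)
    (h2 : EqOrTriple TB P.2 Q.2 R.2) : ∃ t ∈ ProdTriples TA TB, P ∈ t ∧ Q ∈ t ∧ R ∈ t := by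
  obtain ⟨a₁, b₁⟩ := P
  obtain ⟨a₂, b₂⟩ := Q
  obtain ⟨a₃, b₃⟩ := R
  simp only [ProdTriples, mem_filter, mem_univ, true_and]
  rcases h1 with ⟨h12, h23⟩ | ⟨h12, h13, h23, s, hs, hs1, hs2, hs3⟩
  · rcases h2 with ⟨k12, k23⟩ | ⟨k12, k13, k23, r, hr, hr1, hr2, hr3⟩
    · exact absurd (Prod.ext h12 k12) hPQ
    · dsimp only at *
      subst h12 h23
      exact ⟨_, Or.inl ⟨a₁, r, hr, rfl⟩, mem_image_of_mem _ hr1, mem_image_of_mem _ hr2,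
        mem_image_of_mem _ hr3⟩
  · rcases h2 with ⟨k12, k23⟩ | ⟨k12, k13, k23, r, hr, hr1, hr2, hr3⟩
    · dsimp only at *
      subst k12 k23
      exact ⟨_, Or.inr (Or.inl ⟨b₁, s, hs, rfl⟩), mem_image_of_mem _ hs1,
        mem_image_of_mem _ hs2, mem_image_of_mem _ hs3⟩
    · rw [eq_triple_of_card (hA.1 s hs) h12 h13 h23 hs1 hs2 hs3] at hs
      rw [eq_triple_of_card (hB.1 r hr) k12 k13 k23 hr1 hr2 hr3] at hr
      exact ⟨_, Or.inr (Or.inr ⟨a₁, a₂, a₃, b₁, b₂, b₃, hs, hr, rfl⟩), by simp⟩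

theorem IsPSTS.prodTriples {α β : Type*} [Fintype α] [Fintype β]
    {TA : Finset (Finset α)} {TB : Finset (Finset β)} (hA : IsPSTS TA) (hB : IsPSTS TB) :
    IsPSTS (ProdTriples TA TB) := by
  have key : ∀ t ∈ ProdTriples TA TB, ∀ P Q, P ≠ Q → P ∈ t → Q ∈ t → ∃ R,
      EqOrTriple TA P.1 Q.1 R.1 ∧ EqOrTriple TB P.2 Q.2 R.2 ∧ t = {P, Q, R} := by
    intro t ht P Q hPQ hP hQ
    obtain ⟨X, Y, Z, -, -, -, h1, h2, rfl⟩ := exists_of_mem_ProdTriples hA hB ht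
    simp only [mem_insert, mem_singleton] at hP hQ
    rcases hP with rfl | rfl | rfl <;> rcases hQ with rfl | rfl | rfl
    · exact absurd rfl hPQ
    · exact ⟨Z, h1, h2, rfl⟩
    · exact ⟨Y, h1.swap.rotate, h2.swap.rotate, by grind⟩
    · exact ⟨Z, h1.swap, h2.swap, by grind⟩
    · exact absurd rfl hPQ
    · exact ⟨X, h1.rotate, h2.rotate, by grind⟩
    · exact ⟨Y, h1.rotate.rotate, h2.rotate.rotate, by grind⟩
    · exact ⟨X, h1.rotate.swap, h2.rotate.swap, by grind⟩
    · exact absurd rfl hPQ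
  refine ⟨fun t ht => ?_, fun P Q hPQ t₁ ht₁ t₂ ht₂ hP₁ hQ₁ hP₂ hQ₂ => ?_⟩
  · obtain ⟨X, Y, Z, h1, h2, h3, -, -, rfl⟩ := exists_of_mem_ProdTriples hA hB ht
    exact card_eq_three.2 ⟨X, Y, Z, h1, h2, h3, rfl⟩
  · obtain ⟨R, h1, h2, rfl⟩ := key t₁ ht₁ P Q hPQ hP₁ hQ₁
    obtain ⟨S, h3, h4, rfl⟩ := key t₂ ht₂ P Q hPQ hP₂ hQ₂
    rw [Prod.ext (h1.unique hA h3) (h2.unique hB h4)]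

theorem IsLineMap.eqOrTriple {α : Type*} {n : ℕ} {T : Finset (Finset α)} {φ : PGPoint n → α}
    (h : IsLineMap T φ) {x y z : PGPoint n} (hxy : x ≠ y) (hz : x.1 + y.1 = z.1) :
    EqOrTriple T (φ x) (φ y) (φ z) :=
  Or.inr ⟨h.1.ne hxy, h.1.ne (ne_of_add_eq hz).1, h.1.ne (ne_of_add_eq hz).2, h.2 x y z hxy hz⟩

theorem isLineMap_prod {α β : Type*} [Fintype α] [Fintype β] {n : ℕ}
    {TA : Finset (Finset α)} {TB : Finset (Finset β)} (hA : IsPSTS TA) (hB : IsPSTS TB)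
    {φ : PGPoint n → α} {ψ : PGPoint n → β}
    (hinj : Function.Injective fun x => (φ x, ψ x))
    (hφ : ∀ x y z : PGPoint n, x ≠ y → x.1 + y.1 = z.1 → EqOrTriple TA (φ x) (φ y) (φ z))
    (hψ : ∀ x y z : PGPoint n, x ≠ y → x.1 + y.1 = z.1 → EqOrTriple TB (ψ x) (ψ y) (ψ z)) :
    IsLineMap (ProdTriples TA TB) fun x => (φ x, ψ x) :=
  ⟨hinj, fun x y z hxy hz =>
    exists_mem_ProdTriples hA hB (hinj.ne hxy) (hφ x y z hxy hz) (hψ x y z hxy hz)⟩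

theorem PG32Paired.prodTriples {α β : Type*} [Fintype α] [Fintype β]
    {TA : Finset (Finset α)} {TB : Finset (Finset β)} (hA : IsPSTS TA) (hB : IsPSTS TB)
    (hA' : PG32Paired TA) (hB' : PG32Paired TB) : PG32Paired (ProdTriples TA TB) := by
  rintro ⟨a, b⟩ ⟨a', b'⟩ hne
  by_cases ha : a = a'
  · subst ha
    obtain ⟨ψ, hψ, rfl, rfl⟩ := hB' b b' fun e => hne (e ▸ rfl)
    exact ⟨fun x => (a, ψ x), isLineMap_prod hA hB (fun x y h => hψ.1 (congrArg Prod.snd h))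
      (fun _ _ _ _ _ => Or.inl ⟨rfl, rfl⟩) (fun _ _ _ => hψ.eqOrTriple), rfl, rfl⟩
  obtain ⟨φ, hφ, rfl, rfl⟩ := hA' a a' ha
  by_cases hb : b = b'
  · subst hb
    exact ⟨fun x => (φ x, b), isLineMap_prod hA hB (fun x y h => hφ.1 (congrArg Prod.fst h))
      (fun _ _ _ => hφ.eqOrTriple) (fun _ _ _ _ _ => Or.inl ⟨rfl, rfl⟩), rfl, rfl⟩
  · obtain ⟨ψ, hψ, rfl, rfl⟩ := hB' b b' hb
    exact ⟨fun x => (φ x, ψ x), isLineMap_prod hA hB (fun x y h => hφ.1 (congrArg Prod.fst h))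
      (fun _ _ _ => hφ.eqOrTriple) (fun _ _ _ => hψ.eqOrTriple), rfl, rfl⟩

theorem isPSTS_PGTriples (n : ℕ) : IsPSTS (PGTriples n) := by
  refine ⟨fun t ht => ?_, fun p q hpq t₁ h₁ t₂ h₂ hp₁ hq₁ hp₂ hq₂ => ?_⟩
  · simp only [PGTriples, mem_filter] at ht
    exact ht.2.1
  · have key : ∀ t ∈ PGTriples n, p ∈ t → q ∈ t → t = {p, q, thirdPoint hpq} := by
      intro t ht hp hq
      obtain ⟨x, y, z, hxy, hz, rfl⟩ := exists_of_mem_PGTriples ht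
      have h3 : z = thirdPoint hxy := Subtype.ext hz.symm
      subst h3
      have hxx : ∀ v w : Fin (n + 1) → ZMod 2, v + (v + w) = w := fun v w => by
        rw [← add_assoc, CharTwo.add_self_eq_zero, zero_add]
      simp only [mem_insert, mem_singleton] at hp hq
      ext v
      simp only [mem_insert, mem_singleton, thirdPoint, Subtype.ext_iff] at *
      grind
    rw [key t₁ h₁ hp₁ hq₁, key t₂ h₂ hp₂ hq₂]

theorem card_PGPoint (n : ℕ) : Fintype.card (PGPoint n) = 2 ^ (n + 1) - 1 := by
  rw [Fintype.card_subtype_compl]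
  simp

theorem subset_generatedSub {α : Type*} [Fintype α] (T : Finset (Finset α)) (P : Finset α) :
    P ⊆ GeneratedSub T P := fun _ hx =>
  mem_filter.2 ⟨mem_univ _, fun _ _ hP => hP hx⟩

theorem generatedSub_closed {α : Type*} [Fintype α] {T : Finset (Finset α)} {P : Finset α}
    {t : Finset α} (ht : t ∈ T) {a b : α} (hab : a ≠ b) (ha : a ∈ t) (hb : b ∈ t)
    (haP : a ∈ GeneratedSub T P) (hbP : b ∈ GeneratedSub T P) : t ⊆ GeneratedSub T P := by
  simp only [GeneratedSub, mem_filter, mem_univ, true_and] at haP hbP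
  intro x hx
  refine mem_filter.2 ⟨mem_univ _, fun W hW hPW => hW t ht ?_ hx⟩
  exact one_lt_card.2 ⟨a, by simp [ha, haP W hW hPW], b, by simp [hb, hbP W hW hPW], hab⟩

/-- Three non-collinear points span the plane `PG(2,2)`. -/
theorem plane_eq_span : ∀ a b c x : Fin 3 → ZMod 2, a ≠ 0 → b ∉ [0, a] →
    c ∉ [0, a, b, a + b] → x ∈ [0, a, b, c, a + b, a + c, b + c, a + b + c] := by
  decide +kernel

/-- A set of points of the plane `PG(2,2)` closed under taking third points of lines and
containing three non-collinear points is the whole plane. -/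
theorem forall_plane_of_closed {S : PGPoint 2 → Prop}
    (hS : ∀ x y z : PGPoint 2, x ≠ y → x.1 + y.1 = z.1 → S x → S y → S z)
    {a b c : PGPoint 2} (hab : a ≠ b) (hca : c ≠ a) (hcb : c ≠ b) (hc : c.1 ≠ a.1 + b.1)
    (ha : S a) (hb : S b) (hSc : S c) (x : PGPoint 2) : S x := by
  have hab' := hS a b (thirdPoint hab) hab rfl ha hb
  have hne : thirdPoint hab ≠ c := fun e => hc (congrArg Subtype.val e).symm
  have hx := plane_eq_span a.1 b.1 c.1 x.1 a.2
    (by simp [b.2, Subtype.coe_inj, hab.symm]) (by simp [c.2, Subtype.coe_inj, hca, hcb, hc])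
  simp only [List.mem_cons, List.not_mem_nil, or_false, x.2, false_or] at hx
  rcases hx with h | h | h | h | h | h | h
  · rwa [Subtype.ext h]
  · rwa [Subtype.ext h]
  · rwa [Subtype.ext h]
  · exact hS a b x hab h.symm ha hb
  · exact hS a c x hca.symm h.symm ha hSc
  · exact hS b c x hcb.symm h.symm hb hSc
  · exact hS _ c x hne h.symm hab' hSc

theorem PG32TwoPointed.pg32Paired {α : Type*} [Fintype α] {T : Finset (Finset α)}
    (hT : IsSTS T) (h7 : 7 < Fintype.card α) {p q : α} (h : PG32TwoPointed T p q) :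
    PG32Paired T := by
  obtain ⟨hpq, h⟩ := h
  refine pg32Paired_of_mem_range le_rfl fun x y _ => ?_
  have of_sub : ∀ G : Finset α, IsPGSub 3 T G → x ∈ G → y ∈ G →
      ∃ φ : PGPoint 3 → α, IsLineMap T φ ∧ x ∈ Set.range φ ∧ y ∈ Set.range φ := by
    rintro G ⟨φ, hφ, rfl⟩ hx hy
    exact ⟨φ, hφ.isLineMap, by simpa using hx, by simpa using hy⟩
  obtain ⟨s, hsub, hs⟩ := exists_superset_card_eq (s := {p, q, x, y}) (n := 4) card_le_four
    (by omega)
  have hps : p ∈ s := hsub (by simp)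
  have hqs : q ∈ s := hsub (by simp)
  have hxs : x ∈ s := hsub (by simp)
  have hys : y ∈ s := hsub (by simp)
  have hsG := subset_generatedSub T s
  rcases h s hs hps hqs with h2 | h3
  · obtain ⟨φ, hφ, hG⟩ := h2
    have hL := hφ.isLineMap
    obtain ⟨l, ⟨hl, hpl, hql⟩, -⟩ := hT.2 p q hpq
    obtain ⟨u, hus, hul⟩ : ∃ u ∈ s, u ∉ l := by
      by_contra! hcon
      have := card_le_card (show s ⊆ l from hcon)
      rw [hT.1 l hl] at this
      omega
    obtain ⟨z, hz⟩ : ∃ z, z ∉ GeneratedSub T s := by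
      by_contra! hcon
      have h1 : GeneratedSub T s = univ := eq_univ_iff_forall.2 hcon
      have h2 := card_univ (α := α)
      rw [← h1, ← hG, card_image_of_injective _ hL.1, card_univ, card_PGPoint] at h2
      omega
    have hup : u ≠ p := fun e => hul (e ▸ hpl)
    have huq : u ≠ q := fun e => hul (e ▸ hql)
    have hzs : ∀ v ∈ s, v ≠ z := fun v hv e => hz (hsG (e ▸ hv))
    have hcard : ({p, q, u, z} : Finset α).card = 4 :=
      card_eq_succ.2 ⟨p, {q, u, z}, by simp [hpq, hup.symm, hzs p hps], rfl,
        card_eq_three.2 ⟨q, u, z, huq.symm, hzs q hqs, hzs u hus, rfl⟩⟩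
    have hsG' := subset_generatedSub T {p, q, u, z}
    have hGG : GeneratedSub T s ⊆ GeneratedSub T {p, q, u, z} := by
      have hps' := hsG hps
      have hqs' := hsG hqs
      have hus' := hsG hus
      rw [← hG] at hps' hqs' hus' ⊢
      obtain ⟨a, -, rfl⟩ := mem_image.1 hps'
      obtain ⟨b, -, rfl⟩ := mem_image.1 hqs'
      obtain ⟨c, -, rfl⟩ := mem_image.1 hus'
      have hab : a ≠ b := fun e => hpq (e ▸ rfl)
      intro v hv
      obtain ⟨w, -, rfl⟩ := mem_image.1 hv
      refine forall_plane_of_closed (S := fun w => φ w ∈ GeneratedSub T _) ?_ hab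
        (fun e => hup (e ▸ rfl)) (fun e => huq (e ▸ rfl)) ?_ (hsG' (by simp)) (hsG' (by simp))
        (hsG' (by simp)) w
      · intro x y z hxy hz hx hy
        obtain ⟨t, ht, h1, h2, h3⟩ := hL.2 x y z hxy hz
        exact generatedSub_closed ht (hL.1.ne hxy) h1 h2 hx hy h3
      · intro hc
        obtain ⟨t, ht, h1, h2, h3⟩ := hL.2 a b c hab hc.symm
        exact hul (hT.isPSTS.2 _ _ hpq t ht l hl h1 h2 hpl hql ▸ h3)
    rcases h _ hcard (by simp) (by simp) with ⟨ψ, hψ, hG'⟩ | h3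
    · refine absurd (hsG' (by simp)) (?_ : z ∉ _)
      rwa [← eq_of_subset_of_card_le hGG]
      rw [← hG, ← hG', card_image_of_injective _ hψ.1, card_image_of_injective _ hφ.1]
    · exact of_sub _ h3 (hGG (hsG hxs)) (hGG (hsG hys))
  · exact of_sub _ h3 (hsG hxs) (hsG hys)

/-- **Lemma 2.3.** Let `Y₁` be a `PG(3,2)`-2-pointed Steiner triple system with more
than 7 points and `|Y₁| ≡ 7 (mod 8)`.  If `k ≥ 4` and `Y := Y₁ × PG(k−1,2)`, then
(i) `|Y| ≡ 1 (mod 8)`, and (ii) `Y₁` and `Y` are both `PG(2,2)`-paired. -/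
theorem stmt6 {γ : Type*} [Fintype γ] (T₁ : Finset (Finset γ)) (hT : IsSTS T₁)
    (h7 : 7 < Fintype.card γ) (hmod : Fintype.card γ % 8 = 7)
    (hpt : ∃ p q : γ, PG32TwoPointed T₁ p q) (k : ℕ) (hk : 4 ≤ k) :
    Fintype.card (γ × PGPoint (k - 1)) % 8 = 1 ∧
    PG22Paired T₁ ∧ PG22Paired (ProdTriples T₁ (PGTriples (k - 1))) := by
  have hpaired : PG32Paired T₁ := by
    obtain ⟨p, q, h⟩ := hpt
    exact h.pg32Paired hT h7
  have hP := hT.isPSTS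
  have hPG := isPSTS_PGTriples (k - 1)
  refine ⟨?_, hpaired.pg22Paired hP, ?_⟩
  · obtain ⟨m, rfl⟩ := Nat.exists_eq_add_of_le hk
    have hc : Fintype.card (PGPoint (4 + m - 1)) % 8 = 7 := by
      rw [card_PGPoint, show 4 + m - 1 + 1 = m + 1 + 3 by omega, pow_add]
      have := Nat.pos_of_ne_zero (pow_ne_zero (m + 1) (two_ne_zero (α := ℕ)))
      omega
    rw [Fintype.card_prod, Nat.mul_mod, hmod, hc]
  · exact (hpaired.prodTriples hP hPG (pg32Paired_PGTriples (by omega))).pg22Paired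
      (hP.prodTriples hPG)

end
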